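/- Let σ1, σ2 : ℂ, assume Q is symmetric, and assume G(σ1), G(σ2), G(σ1+σ2), Wᵀ * G(σ1) * V, Wᵀ * G(σ2) * V and Wᵀ * G(σ1+σ2) * V are invertible. If x1(σ1), x1(σ2), x2(σ1, σ2) lie in the column span of V and y1(σ1+σ2), y2(σ1, σ2) lie in the column span of W, then the reduced model matches the first partial derivative of the second-order transfer function: deriv (fun s => H2(s, σ2)) σ1 = deriv (fun s => Ĥ2(s, σ2)) σ1. -/

import Mathlib

open Matrix
open scoped Kronecker

noncomputable section

/-- Kronecker product of vectors: `(u ⊗ v) (l, j) = u l * v j`. -/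
def vkron {n : ℕ} (u v : Fin n → ℂ) : Fin n × Fin n → ℂ :=
  fun p => u p.1 * v p.2

/-- The matrix pencil `G(s) = s • E - A`. -/
def Gm {n : ℕ} (E A : Matrix (Fin n) (Fin n) ℂ) (s : ℂ) : Matrix (Fin n) (Fin n) ℂ :=
  s • E - A

/-- Primal state of the first subsystem: `x1(s) = G(s)⁻¹ *ᵥ B`. -/
def x1 {n : ℕ} (E A : Matrix (Fin n) (Fin n) ℂ) (B : Fin n → ℂ) (s : ℂ) : Fin n → ℂ :=
  (Gm E A s)⁻¹ *ᵥ B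

/-- First-order transfer function `H1(s) = C ⬝ᵥ x1(s)`. -/
def H1 {n : ℕ} (E A : Matrix (Fin n) (Fin n) ℂ) (B C : Fin n → ℂ) (s : ℂ) : ℂ :=
  C ⬝ᵥ x1 E A B s

/-- Second-order input term `B₂(s1, s2)`. -/
def B2 {n : ℕ} (E A N : Matrix (Fin n) (Fin n) ℂ) (Q : Matrix (Fin n) (Fin n × Fin n) ℂ)
    (B : Fin n → ℂ) (s1 s2 : ℂ) : Fin n → ℂ :=
  Q *ᵥ vkron (x1 E A B s1) (x1 E A B s2) + (1/2 : ℂ) • (N *ᵥ (x1 E A B s1 + x1 E A B s2))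

/-- Primal state of the second subsystem: `x2(s1, s2) = G(s1+s2)⁻¹ *ᵥ B₂(s1, s2)`. -/
def x2 {n : ℕ} (E A N : Matrix (Fin n) (Fin n) ℂ) (Q : Matrix (Fin n) (Fin n × Fin n) ℂ)
    (B : Fin n → ℂ) (s1 s2 : ℂ) : Fin n → ℂ :=
  (Gm E A (s1 + s2))⁻¹ *ᵥ B2 E A N Q B s1 s2

/-- Second-order (symmetric) transfer function `H2(s1, s2) = C ⬝ᵥ x2(s1, s2)`. -/
def H2 {n : ℕ} (E A N : Matrix (Fin n) (Fin n) ℂ) (Q : Matrix (Fin n) (Fin n × Fin n) ℂ)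
    (B C : Fin n → ℂ) (s1 s2 : ℂ) : ℂ :=
  C ⬝ᵥ x2 E A N Q B s1 s2

/-- Dual state of the first subsystem: `y1(s) = (G(s)ᵀ)⁻¹ *ᵥ C`. -/
def y1 {n : ℕ} (E A : Matrix (Fin n) (Fin n) ℂ) (C : Fin n → ℂ) (s : ℂ) : Fin n → ℂ :=
  ((Gm E A s)ᵀ)⁻¹ *ᵥ C

/-- Mode-2 matricization: `Q⁽²⁾ j (l, i) = Q i (l, j)`. -/
def mode2 {n : ℕ} (Q : Matrix (Fin n) (Fin n × Fin n) ℂ) : Matrix (Fin n) (Fin n × Fin n) ℂ :=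
  fun j p => Q p.2 (p.1, j)

/-- Dual output term `C₂(s1, s2)`. -/
def C2 {n : ℕ} (E A N : Matrix (Fin n) (Fin n) ℂ) (Q : Matrix (Fin n) (Fin n × Fin n) ℂ)
    (B C : Fin n → ℂ) (s1 s2 : ℂ) : Fin n → ℂ :=
  mode2 Q *ᵥ vkron (x1 E A B s2) (y1 E A C (s1 + s2)) +
    (1/2 : ℂ) • (Nᵀ *ᵥ y1 E A C (s1 + s2))

/-- Dual state of the second subsystem: `y2(s1, s2) = (G(s1)ᵀ)⁻¹ *ᵥ C₂(s1, s2)`. -/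
def y2 {n : ℕ} (E A N : Matrix (Fin n) (Fin n) ℂ) (Q : Matrix (Fin n) (Fin n × Fin n) ℂ)
    (B C : Fin n → ℂ) (s1 s2 : ℂ) : Fin n → ℂ :=
  ((Gm E A s1)ᵀ)⁻¹ *ᵥ C2 E A N Q B C s1 s2

/-- `Q` is symmetric: `Q *ᵥ (u ⊗ v) = Q *ᵥ (v ⊗ u)` for all `u, v`. -/
def QSymm {n : ℕ} (Q : Matrix (Fin n) (Fin n × Fin n) ℂ) : Prop :=
  ∀ u v : Fin n → ℂ, Q *ᵥ vkron u v = Q *ᵥ vkron v u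

/-- Euclidean (ℓ²) norm of a vector in `Fin n → ℂ`. -/
def vnorm {n : ℕ} (v : Fin n → ℂ) : ℝ := ‖(WithLp.equiv 2 (Fin n → ℂ)).symm v‖

/-- ℓ²-induced operator norm of a square complex matrix. -/
def mnorm {n : ℕ} (M : Matrix (Fin n) (Fin n) ℂ) : ℝ := ‖Matrix.toEuclideanCLM (𝕜 := ℂ) M‖


section
attribute [local instance] Matrix.linftyOpNormedRing Matrix.linftyOpNormedAlgebra

theorem hasDerivAt_Gm_inv_entry {n : ℕ} (E A : Matrix (Fin n) (Fin n) ℂ) (s : ℂ)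
    (h : IsUnit (Gm E A s)) (i j : Fin n) :
    HasDerivAt (fun t => (Gm E A t)⁻¹ i j) (-((Gm E A s)⁻¹ * E * (Gm E A s)⁻¹) i j) s := by
  obtain ⟨u, hu⟩ := h
  have h1 : HasDerivAt (fun t => Gm E A t) E s := by
    have := ((hasDerivAt_id s).smul_const E).sub_const A
    rw [one_smul] at this
    exact this
  have h2 := hasFDerivAt_ringInverse (𝕜 := ℂ) u
  rw [hu] at h2
  have h3 := h2.comp_hasDerivAt s h1
  let L : Matrix (Fin n) (Fin n) ℂ →ₗ[ℂ] ℂ := Matrix.entryLinearMap ℂ ℂ i j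
  have h4 := (LinearMap.toContinuousLinearMap L).hasFDerivAt.comp_hasDerivAt s h3
  have hinv : (↑u⁻¹ : Matrix (Fin n) (Fin n) ℂ) = (Gm E A s)⁻¹ := by
    rw [← hu, Matrix.coe_units_inv]
  simp only [Matrix.nonsing_inv_eq_ringInverse] at hinv ⊢
  rw [← hinv]
  refine HasDerivAt.congr_deriv h4 ?_
  simp [L]
  rfl
end

theorem hasDerivAt_mulVec {m n : Type*} [Fintype n] {M : ℂ → Matrix m n ℂ}
    {M' : Matrix m n ℂ} {v : ℂ → n → ℂ} {v' : n → ℂ} {s : ℂ}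
    (hM : ∀ i j, HasDerivAt (fun t => M t i j) (M' i j) s)
    (hv : ∀ j, HasDerivAt (fun t => v t j) (v' j) s) (i : m) :
    HasDerivAt (fun t => (M t *ᵥ v t) i) ((M' *ᵥ v s + M s *ᵥ v') i) s := by
  have := HasDerivAt.fun_sum (u := Finset.univ) fun j _ => (hM i j).mul (hv j)
  simpa [Matrix.mulVec, dotProduct, Finset.sum_add_distrib] using this

theorem dot_mode2 {n : ℕ} (Q : Matrix (Fin n) (Fin n × Fin n) ℂ) (x y z : Fin n → ℂ) :
    (mode2 Q *ᵥ vkron x y) ⬝ᵥ z = y ⬝ᵥ (Q *ᵥ vkron x z) := by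
  simp only [mode2, Matrix.mulVec, dotProduct, vkron, Fintype.sum_prod_type, Finset.sum_mul,
    Finset.mul_sum]
  rw [Finset.sum_comm]
  conv_rhs => rw [Finset.sum_comm]
  refine Finset.sum_congr rfl fun l _ => ?_
  rw [Finset.sum_comm]
  refine Finset.sum_congr rfl fun l _ => Finset.sum_congr rfl fun l _ => ?_
  ring

theorem dot_inv_transpose {n : ℕ} (G : Matrix (Fin n) (Fin n) ℂ) (u v : Fin n → ℂ) :
    (Gᵀ⁻¹ *ᵥ u) ⬝ᵥ v = u ⬝ᵥ (G⁻¹ *ᵥ v) := by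
  rw [← Matrix.transpose_nonsing_inv, Matrix.mulVec_transpose, Matrix.dotProduct_mulVec]

theorem hasDerivAt_H2 {n : ℕ} (E A N : Matrix (Fin n) (Fin n) ℂ)
    (Q : Matrix (Fin n) (Fin n × Fin n) ℂ) (B C : Fin n → ℂ) (s1 s2 : ℂ) (hQ : QSymm Q)
    (hG1 : IsUnit (Gm E A s1)) (hG12 : IsUnit (Gm E A (s1 + s2))) :
    HasDerivAt (fun s => H2 E A N Q B C s s2)
      (-(y1 E A C (s1 + s2) ⬝ᵥ (E *ᵥ x2 E A N Q B s1 s2))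
        - (y2 E A N Q B C s1 s2 ⬝ᵥ (E *ᵥ x1 E A B s1))) s1 := by
  let x' : Fin n → ℂ := -((Gm E A s1)⁻¹ *ᵥ (E *ᵥ x1 E A B s1))
  have hx : ∀ j, HasDerivAt (fun t => x1 E A B t j) (x' j) s1 := by
    intro j
    have := hasDerivAt_mulVec (M' := -((Gm E A s1)⁻¹ * E * (Gm E A s1)⁻¹)) (v := fun _ => B)
      (v' := 0) (hasDerivAt_Gm_inv_entry E A s1 hG1) (fun j => hasDerivAt_const s1 (B j)) j
    refine HasDerivAt.congr_deriv this ?_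
    simp [x', x1, Matrix.mulVec_mulVec, Matrix.mul_assoc, Matrix.neg_mulVec]
  let b' : Fin n → ℂ := Q *ᵥ vkron x' (x1 E A B s2) + (1/2 : ℂ) • (N *ᵥ x')
  have hb : ∀ j, HasDerivAt (fun t => B2 E A N Q B t s2 j) (b' j) s1 := by
    intro j
    have h1 := hasDerivAt_mulVec (M := fun _ => Q) (M' := 0)
      (v := fun t => vkron (x1 E A B t) (x1 E A B s2)) (v' := vkron x' (x1 E A B s2)) (s := s1)
      (fun i j => hasDerivAt_const s1 (Q i j)) (fun p => (hx p.1).mul_const _) j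
    have h2 := hasDerivAt_mulVec (M := fun _ => N) (M' := 0)
      (v := fun t => x1 E A B t + x1 E A B s2) (v' := x') (s := s1)
      (fun i j => hasDerivAt_const s1 (N i j)) (fun p => (hx p).add_const _) j
    have := h1.add (h2.const_mul (1/2 : ℂ))
    refine HasDerivAt.congr_deriv this ?_
    simp [b']
  have hx2 : ∀ j, HasDerivAt (fun t => x2 E A N Q B t s2 j)
      ((-((Gm E A (s1+s2))⁻¹ *ᵥ (E *ᵥ x2 E A N Q B s1 s2)) + (Gm E A (s1+s2))⁻¹ *ᵥ b') j) s1 := by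
    intro j
    have := hasDerivAt_mulVec (M := fun t => (Gm E A (t + s2))⁻¹)
      (M' := -((Gm E A (s1+s2))⁻¹ * E * (Gm E A (s1+s2))⁻¹))
      (fun i j => (hasDerivAt_Gm_inv_entry E A (s1+s2) hG12 i j).comp_add_const s1 s2) hb j
    refine HasDerivAt.congr_deriv this ?_
    simp [x2, Matrix.mulVec_mulVec, Matrix.mul_assoc, Matrix.neg_mulVec]
  have := HasDerivAt.fun_sum (u := Finset.univ) fun j _ => (hx2 j).const_mul (C j)
  refine HasDerivAt.congr_deriv this ?_
  symm
  change _ = C ⬝ᵥ _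
  rw [dotProduct_add, dotProduct_neg, ← dot_inv_transpose, ← dot_inv_transpose, sub_eq_add_neg]
  congr 1
  change _ = y1 E A C (s1 + s2) ⬝ᵥ b'
  have e : y2 E A N Q B C s1 s2 ⬝ᵥ (E *ᵥ x1 E A B s1) = - (C2 E A N Q B C s1 s2 ⬝ᵥ x') := by
    simp only [x', y2, dot_inv_transpose, dotProduct_neg, neg_neg]
  rw [e, neg_neg, C2, add_dotProduct, dot_mode2, hQ]
  simp only [b', dotProduct_add, smul_dotProduct, dotProduct_smul, Matrix.mulVec_transpose,
    Matrix.dotProduct_mulVec]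

theorem kron_mulVec_vkron {n r : ℕ} (V W : Matrix (Fin n) (Fin r) ℂ) (u v : Fin r → ℂ) :
    (V ⊗ₖ W) *ᵥ vkron u v = vkron (V *ᵥ u) (W *ᵥ v) := by
  ext ⟨a, b⟩
  simp only [vkron, Matrix.mulVec, dotProduct, Fintype.sum_prod_type, Matrix.kroneckerMap_apply,
    Finset.sum_mul_sum]
  refine Finset.sum_congr rfl fun l _ => Finset.sum_congr rfl fun l _ => ?_
  ring

theorem Gm_red {n r : ℕ} (E A : Matrix (Fin n) (Fin n) ℂ) (V W : Matrix (Fin n) (Fin r) ℂ)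
    (s : ℂ) : Gm (Wᵀ * E * V) (Wᵀ * A * V) s = Wᵀ * Gm E A s * V := by
  simp [Gm, Matrix.mul_sub, Matrix.sub_mul]

/-- Petrov-Galerkin projection reproduces a solution lying in the trial space. -/
theorem proj_solve {n r : ℕ} {G : Matrix (Fin n) (Fin n) ℂ} {V W : Matrix (Fin n) (Fin r) ℂ}
    (hG : IsUnit G) (hr : IsUnit (Wᵀ * G * V)) {b : Fin n → ℂ} {c : Fin r → ℂ}
    (h : G⁻¹ *ᵥ b = V *ᵥ c) : (Wᵀ * G * V)⁻¹ *ᵥ (Wᵀ *ᵥ b) = c := by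
  have hb : b = G *ᵥ (V *ᵥ c) := by
    rw [← h, Matrix.mulVec_mulVec, Matrix.mul_nonsing_inv _ ((Matrix.isUnit_iff_isUnit_det _).1 hG),
      Matrix.one_mulVec]
  rw [hb, Matrix.mulVec_mulVec (M := Wᵀ), Matrix.mulVec_mulVec (M := Wᵀ * G), Matrix.mulVec_mulVec,
    Matrix.nonsing_inv_mul _ ((Matrix.isUnit_iff_isUnit_det _).1 hr), Matrix.one_mulVec]

theorem proj_solve_t {n r : ℕ} {G : Matrix (Fin n) (Fin n) ℂ} {V W : Matrix (Fin n) (Fin r) ℂ}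
    (hG : IsUnit G) (hr : IsUnit (Wᵀ * G * V)) {b : Fin n → ℂ} {c : Fin r → ℂ}
    (h : Gᵀ⁻¹ *ᵥ b = W *ᵥ c) : (Wᵀ * G * V)ᵀ⁻¹ *ᵥ (Vᵀ *ᵥ b) = c := by
  have e : (Wᵀ * G * V)ᵀ = Vᵀ * Gᵀ * W := by
    simp [Matrix.transpose_mul, Matrix.mul_assoc]
  have hr' := (Matrix.isUnit_transpose _).2 hr
  rw [e] at hr' ⊢
  exact proj_solve ((Matrix.isUnit_transpose _).2 hG) hr' h

theorem reduced_H2_first_partial_matching {n r : ℕ}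
    (E A N : Matrix (Fin n) (Fin n) ℂ) (Q : Matrix (Fin n) (Fin n × Fin n) ℂ)
    (B C : Fin n → ℂ) (V W : Matrix (Fin n) (Fin r) ℂ) (σ1 σ2 : ℂ)
    (hQ : QSymm Q)
    (hG1 : IsUnit (Gm E A σ1)) (hG2 : IsUnit (Gm E A σ2))
    (hG12 : IsUnit (Gm E A (σ1 + σ2)))
    (hGr1 : IsUnit (Wᵀ * Gm E A σ1 * V)) (hGr2 : IsUnit (Wᵀ * Gm E A σ2 * V))
    (hGr12 : IsUnit (Wᵀ * Gm E A (σ1 + σ2) * V))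
    (hx1 : ∃ c : Fin r → ℂ, x1 E A B σ1 = V *ᵥ c)
    (hx2 : ∃ c : Fin r → ℂ, x1 E A B σ2 = V *ᵥ c)
    (hx12 : ∃ c : Fin r → ℂ, x2 E A N Q B σ1 σ2 = V *ᵥ c)
    (hy1 : ∃ d : Fin r → ℂ, y1 E A C (σ1 + σ2) = W *ᵥ d)
    (hy2 : ∃ d : Fin r → ℂ, y2 E A N Q B C σ1 σ2 = W *ᵥ d) :
    deriv (fun s => H2 E A N Q B C s σ2) σ1 =
      deriv (fun s => H2 (Wᵀ * E * V) (Wᵀ * A * V) (Wᵀ * N * V) (Wᵀ * Q * (V ⊗ₖ V))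
        (Wᵀ *ᵥ B) (Vᵀ *ᵥ C) s σ2) σ1 := by
  obtain ⟨c1, hc1⟩ := hx1
  obtain ⟨c2, hc2⟩ := hx2
  obtain ⟨c12, hc12⟩ := hx12
  obtain ⟨d1, hd1⟩ := hy1
  obtain ⟨d2, hd2⟩ := hy2
  have hQr : QSymm (Wᵀ * Q * (V ⊗ₖ V)) := by
    intro u v
    rw [← Matrix.mulVec_mulVec, ← Matrix.mulVec_mulVec, ← Matrix.mulVec_mulVec,
      ← Matrix.mulVec_mulVec, kron_mulVec_vkron, kron_mulVec_vkron, hQ]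
  rw [(hasDerivAt_H2 E A N Q B C σ1 σ2 hQ hG1 hG12).deriv,
    (hasDerivAt_H2 _ _ _ _ _ _ σ1 σ2 hQr (by rwa [Gm_red]) (by rwa [Gm_red])).deriv]
  have r1 : x1 (Wᵀ * E * V) (Wᵀ * A * V) (Wᵀ *ᵥ B) σ1 = c1 := by
    rw [x1, Gm_red]; exact proj_solve hG1 hGr1 hc1
  have r2 : x1 (Wᵀ * E * V) (Wᵀ * A * V) (Wᵀ *ᵥ B) σ2 = c2 := by
    rw [x1, Gm_red]; exact proj_solve hG2 hGr2 hc2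
  have r3 : y1 (Wᵀ * E * V) (Wᵀ * A * V) (Vᵀ *ᵥ C) (σ1 + σ2) = d1 := by
    rw [y1, Gm_red]; exact proj_solve_t hG12 hGr12 hd1
  have r4 : x2 (Wᵀ * E * V) (Wᵀ * A * V) (Wᵀ * N * V) (Wᵀ * Q * (V ⊗ₖ V)) (Wᵀ *ᵥ B) σ1 σ2
      = c12 := by
    rw [x2, Gm_red, ← proj_solve hG12 hGr12 hc12, B2, B2, r1, r2, hc1, hc2]
    congr 1
    rw [← Matrix.mulVec_mulVec, ← Matrix.mulVec_mulVec, kron_mulVec_vkron, ← Matrix.mulVec_add,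
      ← Matrix.mulVec_mulVec, ← Matrix.mulVec_mulVec, Matrix.mulVec_add Wᵀ, Matrix.mulVec_smul]
  have r5 : y2 (Wᵀ * E * V) (Wᵀ * A * V) (Wᵀ * N * V) (Wᵀ * Q * (V ⊗ₖ V)) (Wᵀ *ᵥ B)
      (Vᵀ *ᵥ C) σ1 σ2 = d2 := by
    rw [y2, Gm_red, ← proj_solve_t hG1 hGr1 hd2, C2, C2, r2, r3, hd1, hc2]
    congr 1
    refine dotProduct_eq _ _ fun z => ?_
    have t : ∀ u : Fin n → ℂ, (Vᵀ *ᵥ u) ⬝ᵥ z = u ⬝ᵥ (V *ᵥ z) := fun u => by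
      rw [Matrix.mulVec_transpose, Matrix.dotProduct_mulVec]
    have t' : ∀ u : Fin n → ℂ, d1 ⬝ᵥ (Wᵀ *ᵥ u) = (W *ᵥ d1) ⬝ᵥ u := fun u => by
      rw [Matrix.dotProduct_mulVec, Matrix.vecMul_transpose]
    rw [t, add_dotProduct, add_dotProduct, dot_mode2, dot_mode2, ← Matrix.mulVec_mulVec,
      ← Matrix.mulVec_mulVec, kron_mulVec_vkron, t', smul_dotProduct, smul_dotProduct,
      Matrix.mulVec_transpose, Matrix.mulVec_transpose, ← Matrix.dotProduct_mulVec,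
      ← Matrix.dotProduct_mulVec, ← Matrix.mulVec_mulVec, ← Matrix.mulVec_mulVec, t']
  rw [r1, r3, r4, r5, hc1, hc12, hd1, hd2]
  have f : ∀ (d c : Fin r → ℂ), (W *ᵥ d) ⬝ᵥ (E *ᵥ (V *ᵥ c)) = d ⬝ᵥ ((Wᵀ * E * V) *ᵥ c) := by
    intro d c
    rw [← Matrix.mulVec_mulVec, ← Matrix.mulVec_mulVec, Matrix.dotProduct_mulVec d,
      Matrix.vecMul_transpose]
  rw [f, f]
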